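/- Let 1 ≤ s < S < p/2, let u > 1, and set t = max{ √(4u·s·log C(S,s)/(n(p−S))), 8u·s·log C(S,s)/(n(p−S)) }, where C(S,s) denotes the binomial coefficient 'S choose s'. Consider the test Δ that rejects if and only if there exists a subset 𝐒 ⊆ {1,…,S} with |𝐒| = s such that Tr(A_𝐒(Σ_n − I_p)) ≥ t, where A_𝐒 = ∑_{j∈𝐒} A_j. If σ ≥ (1/s)·( t + (2s+1)·max{ √(u·s/(n(p−S))), 2u·s/(n(p−S)) } ), then P_{I_p}[Δ rejects] + sup_{Σ ∈ F_+(s,S,σ)} P_Σ[Δ accepts] ≤ exp(−(u−1)·log C(S,s)) + exp(−u/4), where P_{I_p} (resp. P_Σ) denotes the law of Σ_n when X_1,…,X_n are i.i.d. N_p(0, I_p) (resp. N_p(0, Σ)). -/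

import Mathlib

open MeasureTheory Matrix Real
open scoped ENNReal BigOperators NNReal

noncomputable def gaussianPDF {p : ℕ} (C : Matrix (Fin p) (Fin p) ℝ) (x : Fin p → ℝ) : ℝ≥0∞ :=
  ENNReal.ofReal ((2 * Real.pi) ^ (-(p : ℝ) / 2) * C.det ^ (-(1:ℝ)/2) *
    Real.exp (-(1/2) * (x ⬝ᵥ C⁻¹.mulVec x)))

/-- The centered multivariate Gaussian measure `N_p(0, C)` on `Fin p → ℝ`. -/
noncomputable def gaussianMeasure {p : ℕ} (C : Matrix (Fin p) (Fin p) ℝ) :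
    Measure (Fin p → ℝ) :=
  MeasureTheory.volume.withDensity (gaussianPDF C)

/-- The law of `n` i.i.d. `N_p(0, C)` vectors. -/
noncomputable def iidGaussian (n p : ℕ) (C : Matrix (Fin p) (Fin p) ℝ) :
    Measure (Fin n → Fin p → ℝ) :=
  MeasureTheory.volume.withDensity fun X => ∏ k, gaussianPDF C (X k)

/-- The sample covariance matrix `Σ_n = (1/n) ∑ X_k X_kᵀ`. -/
noncomputable def sampleCov {n p : ℕ} (X : Fin n → Fin p → ℝ) :
    Matrix (Fin p) (Fin p) ℝ :=
  (n : ℝ)⁻¹ • ∑ k, Matrix.of fun i j => X k i * X k j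

/-- Frobenius norm of a matrix. -/
noncomputable def frobNorm {p : ℕ} (M : Matrix (Fin p) (Fin p) ℝ) : ℝ :=
  Real.sqrt (∑ i, ∑ j, (M i j)^2)

/-- Spectral (ℓ²-operator) norm of a matrix. -/
noncomputable def specNorm {p : ℕ} (M : Matrix (Fin p) (Fin p) ℝ) : ℝ :=
  ‖Matrix.toEuclideanCLM (𝕜 := ℝ) M‖

/-- The matrix `A_j` with entries `1/(2(p-j))` on the `j`-th upper and lower diagonals. -/
noncomputable def lagMatrix (p j : ℕ) : Matrix (Fin p) (Fin p) ℝ :=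
  Matrix.of fun k l => if ((k:ℤ) - (l:ℤ)).natAbs = j then 1/(2*((p:ℝ) - j)) else 0

/-- Two-sided class `F(s,S,σ)` of sparse Toeplitz covariance matrices with
diagonal value `σ0`. -/
def memF (p s S : ℕ) (σ σ0 : ℝ) (C : Matrix (Fin p) (Fin p) ℝ) : Prop :=
  C.PosDef ∧ ∃ v : ℕ → ℝ, v 0 = σ0 ∧
    (∀ i j : Fin p, C i j = v ((i:ℤ) - (j:ℤ)).natAbs) ∧
    ∃ T : Finset ℕ, T ⊆ Finset.Icc 1 S ∧ T.card = s ∧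
      (∀ j ∈ T, σ ≤ |v j|) ∧ (∀ j, 1 ≤ j → j ≤ p - 1 → j ∉ T → v j = 0)

/-- One-sided class `F₊(s,S,σ)` of sparse Toeplitz covariance matrices with
diagonal value `σ0`. -/
def memFplus (p s S : ℕ) (σ σ0 : ℝ) (C : Matrix (Fin p) (Fin p) ℝ) : Prop :=
  C.PosDef ∧ ∃ v : ℕ → ℝ, v 0 = σ0 ∧
    (∀ i j : Fin p, C i j = v ((i:ℤ) - (j:ℤ)).natAbs) ∧
    ∃ T : Finset ℕ, T ⊆ Finset.Icc 1 S ∧ T.card = s ∧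
      (∀ j ∈ T, σ ≤ v j) ∧ (∀ j, 1 ≤ j → j ≤ p - 1 → j ∉ T → v j = 0)

/-!
Writing `C = P * Pᵀ` with `Pᵀ * A * P` diagonal turns the quadratic form `xᵀ A x` of an `N(0, C)`
vector `x` into a weighted sum of independent `χ²₁` variables, so that `Tr (A * (Σ_n - C))` has a
sub-exponential moment generating function, with variance proxy of order `‖C‖² Tr (A²) / n` and
scale of order `‖A‖ ‖C‖ / n`. Here `‖·‖` is the maximal absolute row sum: it is submultiplicative,
hence dominates all eigenvalues, and it is explicit for Toeplitz matrices. It is at most `2 s + 1`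
on the alternative because a positive semidefinite Toeplitz matrix has `|σ_j| ≤ σ_0`, and at most
`s / (p - S)` for the matrix `A_T = ∑ j ∈ T, A_j`.

Under the null hypothesis, Chernoff's bound at level `u log C(S, s)` and a union bound over the
`C(S, s)` supports control the first-kind error. Under an alternative with support `T`, the
statistic of `T` alone suffices: its mean is `Tr (A_T * (C - I)) = ∑ j ∈ T, σ_j ≥ s σ`, and
Chernoff's bound at level `u / 4` controls the deviation below it.
-/

section ProductMeasure

variable {ι : Type*} {E : ι → Type*} [∀ i, MeasurableSpace (E i)] {μ : ∀ i, Measure (E i)}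
  {f : ∀ i, E i → ℝ≥0∞}

lemma lmarginal_prod_eq_prod [DecidableEq ι] [∀ i, SigmaFinite (μ i)]
    (hf : ∀ i, Measurable (f i)) (s : Finset ι) :
    (∫⋯∫⁻_s, fun x => ∏ i ∈ s, f i (x i) ∂μ) = fun _ => ∏ i ∈ s, ∫⁻ y, f i y ∂μ i := by
  induction s using Finset.induction_on with
  | empty => simp
  | insert i s hi ih =>
    have hprod (t : Finset ι) : Measurable fun x : ∀ i, E i => ∏ j ∈ t, f j (x j) := by fun_prop
    have hinner (x : ∀ i, E i) :
        ∫⁻ y, ∏ j ∈ insert i s, f j (Function.update x i y j) ∂μ i =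
          (∫⁻ y, f i y ∂μ i) * ∏ j ∈ s, f j (x j) := by
      rw [← lintegral_mul_const _ (hf i)]
      refine lintegral_congr fun y => ?_
      rw [Finset.prod_insert hi, Function.update_self]
      congr 1
      refine Finset.prod_congr rfl fun j hj => ?_
      rw [Function.update_of_ne (ne_of_mem_of_not_mem hj hi)]
    funext x
    rw [lmarginal_insert' _ (hprod _) hi, funext hinner, Finset.prod_insert hi, ← congrFun ih x]
    exact lintegral_const_mul _ ((hprod s).comp measurable_updateFinset)

variable [Fintype ι]

lemma lintegral_pi_prod_eq_prod [∀ i, SigmaFinite (μ i)] (hf : ∀ i, Measurable (f i)) :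
    ∫⁻ x, ∏ i, f i (x i) ∂Measure.pi μ = ∏ i, ∫⁻ y, f i y ∂μ i := by
  classical
  have h := lmarginal_prod_eq_prod (μ := μ) hf Finset.univ
  rw [lmarginal_univ] at h
  by_cases hne : Nonempty (∀ i, E i)
  · exact congrFun h hne.some
  · have hempty : IsEmpty (∀ i, E i) := not_nonempty_iff.1 hne
    obtain ⟨i, hi⟩ := isEmpty_pi.1 hempty
    rw [Measure.eq_zero_of_isEmpty (Measure.pi μ), lintegral_zero_measure,
      Finset.prod_eq_zero (Finset.mem_univ i)]
    rw [Measure.eq_zero_of_isEmpty (μ i), lintegral_zero_measure]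

lemma pi_withDensity [∀ i, SigmaFinite (μ i)]
    [∀ i, SigmaFinite ((μ i).withDensity (f i))] (hf : ∀ i, Measurable (f i)) :
    Measure.pi (fun i => (μ i).withDensity (f i)) =
      (Measure.pi μ).withDensity fun x => ∏ i, f i (x i) := by
  refine Measure.pi_eq fun s hs => ?_
  rw [withDensity_apply _ (.univ_pi hs), Measure.restrict_pi_pi, lintegral_pi_prod_eq_prod hf]
  exact Finset.prod_congr rfl fun i _ => (withDensity_apply _ (hs i)).symm

end ProductMeasure

lemma withDensity_map {α β : Type*} [MeasurableSpace α] [MeasurableSpace β] {μ : Measure α}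
    {f : α → β} {g : β → ℝ≥0∞} (hf : Measurable f) (hg : Measurable g) :
    (μ.map f).withDensity g = (μ.withDensity (g ∘ f)).map f := by
  ext s hs
  rw [withDensity_apply _ hs, Measure.map_apply hf hs, withDensity_apply _ (hf hs),
    setLIntegral_map hs hg hf]
  rfl

/-- `X` has a sub-exponential moment generating function with variance proxy `v` and scale `b`:
`𝔼 exp (t X) ≤ exp (v t² / 2)` for `|t| ≤ 1 / b`. The range is written `|t| * b ≤ 1` so that
`b = 0` is the sub-Gaussian case; compare `ProbabilityTheory.HasSubgaussianMGF`. -/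
structure HasSubexponentialMGF {Ω : Type*} {_ : MeasurableSpace Ω} (X : Ω → ℝ) (v b : ℝ)
    (μ : Measure Ω) : Prop where
  integrable_exp_mul : ∀ t, |t| * b ≤ 1 → Integrable (fun ω => exp (t * X ω)) μ
  mgf_le : ∀ t, |t| * b ≤ 1 → ProbabilityTheory.mgf X μ t ≤ exp (v * t ^ 2 / 2)

namespace HasSubexponentialMGF

open ProbabilityTheory (mgf mgf_map mgf_const_mul iIndepFun iIndepFun_pi measure_ge_le_exp_mul_mgf)

variable {Ω Ω' ι : Type*} {_ : MeasurableSpace Ω} {_ : MeasurableSpace Ω'} {μ : Measure Ω}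
  {X : Ω → ℝ} {v v' b b' : ℝ}

lemma mono (h : HasSubexponentialMGF X v b μ) (hv : v ≤ v') (hb : b ≤ b') :
    HasSubexponentialMGF X v' b' μ := by
  have hrange {t : ℝ} (ht : |t| * b' ≤ 1) : |t| * b ≤ 1 :=
    (mul_le_mul_of_nonneg_left hb (abs_nonneg t)).trans ht
  exact ⟨fun t ht => h.integrable_exp_mul t (hrange ht),
    fun t ht => (h.mgf_le t (hrange ht)).trans (by gcongr)⟩

lemma const_mul (h : HasSubexponentialMGF X v b μ) (c : ℝ) :
    HasSubexponentialMGF (fun ω => c * X ω) (c ^ 2 * v) (|c| * b) μ := by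
  have hrange {t : ℝ} (ht : |t| * (|c| * b) ≤ 1) : |c * t| * b ≤ 1 := by
    rwa [abs_mul, mul_comm |c|, mul_assoc]
  refine ⟨fun t ht => ?_, fun t ht => ?_⟩
  · convert h.integrable_exp_mul _ (hrange ht) using 3
    ring
  · rw [mgf_const_mul]
    refine (h.mgf_le _ (hrange ht)).trans_eq ?_
    ring_nf

lemma neg (h : HasSubexponentialMGF X v b μ) : HasSubexponentialMGF (fun ω => -X ω) v b μ := by
  simpa using h.const_mul (-1)

lemma of_map {μ : Measure Ω'} {Y : Ω' → Ω} (hY : Measurable Y) (hX : Measurable X)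
    (h : HasSubexponentialMGF (X ∘ Y) v b μ) : HasSubexponentialMGF X v b (μ.map Y) := by
  have hmeas (t : ℝ) : AEStronglyMeasurable (fun ω => exp (t * X ω)) (μ.map Y) := by fun_prop
  refine ⟨fun t ht => (integrable_map_measure (hmeas t) hY.aemeasurable).2
    (h.integrable_exp_mul t ht), fun t ht => ?_⟩
  rw [mgf_map hY.aemeasurable (hmeas t)]
  exact h.mgf_le t ht

lemma comp_measurePreserving {μ : Measure Ω'} {ν : Measure Ω} {Y : Ω' → Ω}
    (h : HasSubexponentialMGF X v b ν) (hX : Measurable X) (hY : MeasurePreserving Y μ ν) :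
    HasSubexponentialMGF (X ∘ Y) v b μ := by
  have hmeas (t : ℝ) : AEStronglyMeasurable (fun ω => exp (t * X ω)) (μ.map Y) := by fun_prop
  rw [← hY.map_eq] at h
  refine ⟨fun t ht => (integrable_map_measure (hmeas t) hY.aemeasurable).1
    (h.integrable_exp_mul t ht), fun t ht => ?_⟩
  rw [← mgf_map hY.aemeasurable (hmeas t)]
  exact h.mgf_le t ht

lemma sum_of_iIndepFun {X : ι → Ω → ℝ} {v : ι → ℝ} (hindep : iIndepFun X μ)
    (hX : ∀ i, Measurable (X i)) (s : Finset ι)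
    (h : ∀ i ∈ s, HasSubexponentialMGF (X i) (v i) b μ) :
    HasSubexponentialMGF (fun ω => ∑ i ∈ s, X i ω) (∑ i ∈ s, v i) b μ := by
  have := hindep.isProbabilityMeasure
  have hsum : (fun ω => ∑ i ∈ s, X i ω) = ∑ i ∈ s, X i := by
    ext ω
    rw [Finset.sum_apply]
  rw [hsum]
  refine ⟨fun t ht => hindep.integrable_exp_mul_sum hX
    fun i hi => (h i hi).integrable_exp_mul t ht, fun t ht => ?_⟩
  rw [hindep.mgf_sum hX, Finset.sum_mul, Finset.sum_div, exp_sum]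
  exact Finset.prod_le_prod (fun _ _ => ProbabilityTheory.mgf_nonneg)
    fun i hi => (h i hi).mgf_le t ht

lemma sum_pi [Fintype ι] {E : ι → Type*} [∀ i, MeasurableSpace (E i)] {μ : ∀ i, Measure (E i)}
    [∀ i, IsProbabilityMeasure (μ i)] {X : ∀ i, E i → ℝ} {v : ι → ℝ} (hX : ∀ i, Measurable (X i))
    (h : ∀ i, HasSubexponentialMGF (X i) (v i) b (μ i)) :
    HasSubexponentialMGF (fun ω => ∑ i, X i (ω i)) (∑ i, v i) b (Measure.pi μ) :=
  sum_of_iIndepFun (iIndepFun_pi fun i => (hX i).aemeasurable)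
    (fun i => (hX i).comp (measurable_pi_apply i)) Finset.univ
    fun i _ => (h i).comp_measurePreserving (hX i) (measurePreserving_eval μ i)

-- Chernoff's bound at `t = min (√(2x/v)) (1/b)`.
lemma measure_ge_le [IsFiniteMeasure μ] (h : HasSubexponentialMGF X v b μ) (hb : 0 < b) {x : ℝ}
    (hx : 0 ≤ x) :
    μ {ω | max √(2 * v * x) (2 * b * x) ≤ X ω} ≤ ENNReal.ofReal (exp (-x)) := by
  suffices hchernoff : ∃ t, 0 ≤ t ∧ t * b ≤ 1 ∧
      x + v * t ^ 2 / 2 ≤ t * max √(2 * v * x) (2 * b * x) by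
    obtain ⟨t, ht0, htb, hexponent⟩ := hchernoff
    rw [← abs_of_nonneg ht0] at htb
    rw [ENNReal.le_ofReal_iff_toReal_le (measure_ne_top _ _) (exp_pos _).le]
    calc μ.real {ω | max √(2 * v * x) (2 * b * x) ≤ X ω}
        ≤ exp (-t * max √(2 * v * x) (2 * b * x)) * mgf X μ t :=
          measure_ge_le_exp_mul_mgf _ ht0 (h.integrable_exp_mul t htb)
      _ ≤ exp (-t * max √(2 * v * x) (2 * b * x)) * exp (v * t ^ 2 / 2) := by
          gcongr
          exact h.mgf_le t htb
      _ ≤ exp (-x) := by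
          rw [← exp_add]
          gcongr
          linarith
  rcases le_or_gt v (2 * b ^ 2 * x) with hv | hv
  · refine ⟨1 / b, by positivity, (one_div_mul_cancel hb.ne').le, ?_⟩
    calc x + v * (1 / b) ^ 2 / 2 ≤ x + 2 * b ^ 2 * x * (1 / b) ^ 2 / 2 := by gcongr
      _ = 1 / b * (2 * b * x) := by field_simp; ring
      _ ≤ 1 / b * max √(2 * v * x) (2 * b * x) := by gcongr; exact le_max_right _ _
  · have hv0 : 0 < v := lt_of_le_of_lt (by positivity) hv
    refine ⟨√(2 * x / v), sqrt_nonneg _, ?_, ?_⟩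
    · rw [← le_div_iff₀ hb, sqrt_le_left (by positivity), div_pow, one_pow,
        div_le_div_iff₀ hv0 (by positivity)]
      linarith
    · calc x + v * √(2 * x / v) ^ 2 / 2 = 2 * x := by
            rw [sq_sqrt (by positivity)]
            field_simp
            ring
        _ = √(2 * x / v) * √(2 * v * x) := by
            rw [← sqrt_mul (by positivity), show 2 * x / v * (2 * v * x) = (2 * x) ^ 2 by
              field_simp, sqrt_sq (by positivity)]
        _ ≤ √(2 * x / v) * max √(2 * v * x) (2 * b * x) := by gcongr; exact le_max_left _ _

end HasSubexponentialMGF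

section GaussianMeasure

open ProbabilityTheory (gaussianReal mgf)

lemma one_le_one_sub_mul_exp {z : ℝ} (hz : |z| ≤ 1 / 2) : 1 ≤ (1 - z) * exp (z + z ^ 2) := by
  have hhigh : z ≤ 1 / 2 := (abs_le.mp hz).2
  rcases le_total 0 z with h | h
  · have hexp := Real.quadratic_le_exp_of_nonneg (x := z + z ^ 2) (by positivity)
    have hmul : (1 - z) * (1 + (z + z ^ 2) + (z + z ^ 2) ^ 2 / 2) ≤ (1 - z) * exp (z + z ^ 2) :=
      mul_le_mul_of_nonneg_left hexp (by linarith)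
    have hcubic : z ≤ (1 - z) * (1 + z) ^ 2 / 2 := by
      nlinarith [mul_nonneg h (sub_nonneg.2 hhigh),
        mul_nonneg (mul_nonneg h h) (sub_nonneg.2 hhigh)]
    nlinarith [mul_nonneg (sq_nonneg z) (sub_nonneg.2 hcubic)]
  · have hmul : (1 - z) * (z + z ^ 2 + 1) ≤ (1 - z) * exp (z + z ^ 2) :=
      mul_le_mul_of_nonneg_left (Real.add_one_le_exp (z + z ^ 2)) (by linarith)
    nlinarith [mul_nonneg (sq_nonneg z) (neg_nonneg.2 h)]

lemma mgf_sq_sub_one_gaussianReal {t : ℝ} (ht : t < 1 / 2) :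
    mgf (fun z => z ^ 2 - 1) (gaussianReal 0 1) t = exp (-t) * (√(1 - 2 * t))⁻¹ := by
  have hintegrand (z : ℝ) : ProbabilityTheory.gaussianPDFReal 0 1 z • exp (t * (z ^ 2 - 1)) =
      (√(2 * π))⁻¹ * exp (-t) * exp (-(1 / 2 - t) * z ^ 2) := by
    simp only [ProbabilityTheory.gaussianPDFReal, smul_eq_mul, mul_assoc, ← exp_add,
      NNReal.coe_one, mul_one, sub_zero]
    ring_nf
  have hvar : π / (1 / 2 - t) = 2 * π * (1 - 2 * t)⁻¹ := by
    have : 1 / 2 - t ≠ 0 := by linarith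
    have : 1 - 2 * t ≠ 0 := by linarith
    field_simp
  have hpi : √(2 * π) ≠ 0 := by positivity
  rw [mgf, ProbabilityTheory.integral_gaussianReal_eq_integral_smul one_ne_zero]
  simp_rw [hintegrand]
  rw [integral_const_mul, integral_gaussian, hvar,
    sqrt_mul (by positivity : 0 ≤ 2 * π), sqrt_inv]
  field_simp

lemma hasSubexponentialMGF_sq_sub_one_gaussianReal :
    HasSubexponentialMGF (fun z => z ^ 2 - 1) 4 4 (gaussianReal 0 1) := by
  have hhalf {t : ℝ} (ht : |t| * 4 ≤ 1) : t < 1 / 2 := by linarith [le_abs_self t]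
  refine ⟨fun t ht => Integrable.of_integral_ne_zero (ne_of_gt ?_), fun t ht => ?_⟩
  · have hpos : 0 < 1 - 2 * t := by linarith [hhalf ht]
    change 0 < mgf (fun z => z ^ 2 - 1) (gaussianReal 0 1) t
    rw [mgf_sq_sub_one_gaussianReal (hhalf ht)]
    positivity
  · have hpos : 0 < 1 - 2 * t := by linarith [hhalf ht]
    have hkey := one_le_one_sub_mul_exp (z := 2 * t) (by rw [abs_mul, abs_two]; linarith)
    have hsq : exp (4 * t ^ 2 / 2 + t) ^ 2 = exp (2 * t + (2 * t) ^ 2) := by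
      rw [← exp_nat_mul]
      ring_nf
    calc mgf (fun z => z ^ 2 - 1) (gaussianReal 0 1) t
        = exp (-t) * (√(1 - 2 * t))⁻¹ := mgf_sq_sub_one_gaussianReal (hhalf ht)
      _ ≤ exp (-t) * exp (4 * t ^ 2 / 2 + t) := by
          gcongr
          rw [← sqrt_inv, sqrt_le_left (exp_pos _).le, hsq, inv_le_iff_one_le_mul₀' hpos]
          exact hkey
      _ = exp (4 * t ^ 2 / 2) := by
          rw [← exp_add]
          ring_nf

lemma hasSubexponentialMGF_sum_mul_sq_sub_one {ι : Type*} [Fintype ι] {d : ι → ℝ} {K : ℝ}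
    (hd : ∀ i, |d i| ≤ K) :
    HasSubexponentialMGF (fun z : ι → ℝ => ∑ i, d i * (z i ^ 2 - 1)) (4 * ∑ i, d i ^ 2) (4 * K)
      (Measure.pi fun _ => gaussianReal 0 1) := by
  rw [Finset.mul_sum]
  refine .sum_pi (X := fun i z => d i * (z ^ 2 - 1)) (fun i => by fun_prop) fun i => ?_
  refine (hasSubexponentialMGF_sq_sub_one_gaussianReal.const_mul (d i)).mono
    (mul_comm _ _).le ?_
  linarith [hd i]

@[fun_prop]
lemma measurable_mulVec {m : Type*} [Fintype m] (A : Matrix m m ℝ) :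
    Measurable fun x => A *ᵥ x :=
  (continuous_const.matrix_mulVec continuous_id).measurable

@[fun_prop]
lemma measurable_dotProduct_mulVec {m : Type*} [Fintype m] (A : Matrix m m ℝ) :
    Measurable fun x => x ⬝ᵥ A *ᵥ x :=
  (continuous_id.dotProduct (continuous_const.matrix_mulVec continuous_id)).measurable

variable {p : ℕ} {C P : Matrix (Fin p) (Fin p) ℝ}

@[fun_prop]
lemma measurable_gaussianPDF (C : Matrix (Fin p) (Fin p) ℝ) : Measurable (gaussianPDF C) := by
  unfold gaussianPDF
  fun_prop

lemma det_ne_zero_of_mul_transpose_eq (hC : C.PosDef) (hPC : P * Pᵀ = C) : P.det ≠ 0 := by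
  intro h
  simpa [← hPC, h] using hC.det_pos.ne'

lemma gaussianPDF_mulVec (hP : P.det ≠ 0) (hPC : P * Pᵀ = C) (z : Fin p → ℝ) :
    gaussianPDF C (P *ᵥ z) =
      ENNReal.ofReal |P.det⁻¹| * ∏ i, ProbabilityTheory.gaussianPDF 0 1 (z i) := by
  have hquad : (P *ᵥ z) ⬝ᵥ C⁻¹ *ᵥ (P *ᵥ z) = ∑ i, z i ^ 2 := by
    rw [← hPC, Matrix.mul_inv_rev, mulVec_mulVec, Matrix.mul_assoc, nonsing_inv_mul _ hP.isUnit,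
      Matrix.mul_one, dotProduct_mulVec, vecMul_mulVec,
      mul_nonsing_inv _ (by rwa [det_transpose, isUnit_iff_ne_zero]), vecMul_one]
    simp only [dotProduct, sq]
  have hdet : C.det ^ (-(1 : ℝ) / 2) = |P.det⁻¹| := by
    rw [← hPC, det_mul, det_transpose, ← sq, neg_div, rpow_neg (by positivity), ← sqrt_eq_rpow,
      sqrt_sq_eq_abs, abs_inv]
  have hpow : (2 * π) ^ (-(p : ℝ) / 2) = ∏ _i : Fin p, (√(2 * π))⁻¹ := by
    rw [Finset.prod_const, Finset.card_univ, Fintype.card_fin, sqrt_eq_rpow, ← rpow_neg_one,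
      ← rpow_mul (by positivity), ← rpow_natCast, ← rpow_mul (by positivity)]
    ring_nf
  simp only [gaussianPDF, ProbabilityTheory.gaussianPDF, ProbabilityTheory.gaussianPDFReal]
  rw [← ENNReal.ofReal_prod_of_nonneg (fun i _ => by positivity), Finset.prod_mul_distrib,
    ← ENNReal.ofReal_mul (abs_nonneg _), ← exp_sum, hquad, hdet]
  simp only [NNReal.coe_one, mul_one, sub_zero]
  rw [hpow, Finset.mul_sum]
  ring_nf

lemma gaussianMeasure_eq_map (hC : C.PosDef) (hPC : P * Pᵀ = C) :
    gaussianMeasure C = (Measure.pi fun _ => gaussianReal 0 1).map (P *ᵥ ·) := by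
  have hP := det_ne_zero_of_mul_transpose_eq hC hPC
  have hstd : (Measure.pi fun _ : Fin p => gaussianReal 0 1) =
      volume.withDensity fun z => ∏ i, ProbabilityTheory.gaussianPDF 0 1 (z i) := by
    have : SigmaFinite ((volume : Measure ℝ).withDensity (ProbabilityTheory.gaussianPDF 0 1)) := by
      rw [← ProbabilityTheory.gaussianReal_of_var_ne_zero 0 one_ne_zero]
      infer_instance
    simp_rw [ProbabilityTheory.gaussianReal_of_var_ne_zero 0 one_ne_zero]
    exact pi_withDensity fun _ => ProbabilityTheory.measurable_gaussianPDF 0 1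
  have hvol : (volume : Measure (Fin p → ℝ)).map (P *ᵥ ·) = ENNReal.ofReal |P.det⁻¹| • volume :=
    Real.map_matrix_volume_pi_eq_smul_volume_pi hP
  have hscaled : ENNReal.ofReal |P.det⁻¹| • gaussianMeasure C = ENNReal.ofReal |P.det⁻¹| •
      (Measure.pi fun _ => gaussianReal 0 1).map (P *ᵥ ·) := by
    have hdensity : gaussianPDF C ∘ (P *ᵥ ·) = ENNReal.ofReal |P.det⁻¹| •
        fun z => ∏ i, ProbabilityTheory.gaussianPDF 0 1 (z i) :=
      funext (gaussianPDF_mulVec hP hPC)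
    rw [gaussianMeasure, ← withDensity_smul_measure, ← hvol,
      withDensity_map (measurable_mulVec P) (measurable_gaussianPDF C), hdensity,
      withDensity_smul _ (by fun_prop), ← hstd, Measure.map_smul]
  have hc : ENNReal.ofReal |P.det⁻¹| ≠ 0 := by simpa using hP
  ext s _
  have hs := congrArg (fun μ => μ s) hscaled
  rwa [Measure.smul_apply, Measure.smul_apply, smul_eq_mul, smul_eq_mul,
    ENNReal.mul_right_inj hc ENNReal.ofReal_ne_top] at hs

end GaussianMeasure

section MatrixNorms

open scoped Matrix.Norms.Operator MatrixOrder ComplexOrder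

variable {m : Type*} [Fintype m] [DecidableEq m] {𝕜 : Type*} [RCLike 𝕜]

lemma exists_conjTranspose_mul_mul_eq_diagonal {A C : Matrix m m 𝕜} (hA : A.IsHermitian)
    (hC : C.PosSemidef) :
    ∃ (P : Matrix m m 𝕜) (d : m → ℝ), P * Pᴴ = C ∧ Pᴴ * A * P = diagonal fun i => (d i : 𝕜) := by
  obtain ⟨Q, rfl⟩ := CStarAlgebra.nonneg_iff_eq_mul_star_self.1 hC.nonneg
  have hB : (Qᴴ * A * Q).IsHermitian := isHermitian_conjTranspose_mul_mul Q hA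
  let U : Matrix m m 𝕜 := hB.eigenvectorUnitary
  have hU : U * Uᴴ = 1 := Unitary.coe_mul_star_self hB.eigenvectorUnitary
  refine ⟨Q * U, hB.eigenvalues, ?_, ?_⟩
  · rw [conjTranspose_mul, Matrix.mul_assoc, ← Matrix.mul_assoc U, hU, Matrix.one_mul,
      star_eq_conjTranspose]
  · calc (Q * U)ᴴ * A * (Q * U) = Uᴴ * (Qᴴ * A * Q) * U := by
          simp only [conjTranspose_mul, Matrix.mul_assoc]
      _ = diagonal fun i => (hB.eigenvalues i : 𝕜) := by
          have h := hB.conjStarAlgAut_star_eigenvectorUnitary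
          rwa [Unitary.conjStarAlgAut_star_apply] at h

lemma dotProduct_mulVec_of_mul_mul_eq_diagonal {A P : Matrix m m ℝ} {d : m → ℝ}
    (h : Pᵀ * A * P = diagonal d) (z : m → ℝ) :
    (P *ᵥ z) ⬝ᵥ A *ᵥ (P *ᵥ z) = ∑ i, d i * z i ^ 2 := by
  calc (P *ᵥ z) ⬝ᵥ A *ᵥ (P *ᵥ z) = z ⬝ᵥ (Pᵀ * A * P) *ᵥ z := by
        rw [← mulVec_mulVec, ← mulVec_mulVec, dotProduct_mulVec z Pᵀ, vecMul_transpose]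
    _ = ∑ i, d i * z i ^ 2 := by
        rw [h]
        simp only [dotProduct, mulVec_diagonal]
        exact Finset.sum_congr rfl fun i _ => by ring

lemma norm_le_of_mul_mul_eq_diagonal {M P Q : Matrix m m 𝕜} {d : m → 𝕜}
    (h : Q * M * P = diagonal d) (i : m) : ‖d i‖ ≤ ‖M * (P * Q)‖ := by
  have : Nonempty m := ⟨i⟩
  rcases eq_or_ne (d i) 0 with hzero | hne
  · rw [hzero, norm_zero]
    exact norm_nonneg _
  have hmem : d i ∈ spectrum 𝕜 (Q * (M * P)) \ {0} := by
    rw [← Matrix.mul_assoc, h, spectrum_diagonal]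
    exact ⟨Set.mem_range_self i, hne⟩
  rw [spectrum.nonzero_mul_comm, Matrix.mul_assoc] at hmem
  exact spectrum.norm_le_norm_of_mem hmem.1

lemma trace_mul_diagonal_mul_self_le {B : Matrix m m ℝ} (hB : B.IsHermitian) {d : m → ℝ} {K : ℝ}
    (hd : ∀ i, |d i| ≤ K) :
    trace (B * diagonal d * (B * diagonal d)) ≤ K ^ 2 * trace (B * B) := by
  have hsymm (i j : m) : B j i = B i j := hB.apply i j
  have hBd (i j : m) : (B * diagonal d) i j = B i j * d j := mul_diagonal _ _ _ _
  simp only [trace, diag_apply, mul_apply (M := B * diagonal d), mul_apply (M := B) (N := B), hBd,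
    Finset.mul_sum]
  refine Finset.sum_le_sum fun i _ => Finset.sum_le_sum fun j _ => ?_
  calc B i j * d j * (B j i * d i) = B i j ^ 2 * (d j * d i) := by
        rw [hsymm]
        ring
    _ ≤ B i j ^ 2 * K ^ 2 := by
        gcongr
        calc d j * d i ≤ |d j| * |d i| := (le_abs_self _).trans_eq (abs_mul _ _)
          _ ≤ K * K := mul_le_mul (hd j) (hd i) (abs_nonneg _) ((abs_nonneg _).trans (hd j))
          _ = K ^ 2 := (sq K).symm
    _ = K ^ 2 * (B i j * B j i) := by
        rw [hsymm]
        ring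

lemma trace_mul_mul_mul_self_le {A C : Matrix m m ℝ} (hA : A.IsHermitian) (hC : C.IsHermitian) :
    trace (A * C * (A * C)) ≤ ‖C‖ ^ 2 * trace (A * A) := by
  let U : Matrix m m ℝ := hC.eigenvectorUnitary
  let D : Matrix m m ℝ := diagonal hC.eigenvalues
  let B := Uᴴ * A * U
  have hU : U * Uᴴ = 1 := Unitary.coe_mul_star_self hC.eigenvectorUnitary
  have hspectral : C = U * D * Uᴴ := by
    have h := hC.spectral_theorem
    rwa [Unitary.conjStarAlgAut_apply] at h
  have heigenvalue (i : m) : |hC.eigenvalues i| ≤ ‖C‖ :=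
    have : Nonempty m := ⟨i⟩
    spectrum.norm_le_norm_of_mem (hC.eigenvalues_mem_spectrum_real i)
  calc trace (A * C * (A * C)) = trace (B * D * (B * D)) := by
        conv_lhs => rw [hspectral]
        simp only [B, Matrix.mul_assoc]
        rw [trace_mul_comm Uᴴ]
        simp only [Matrix.mul_assoc]
    _ ≤ ‖C‖ ^ 2 * trace (B * B) :=
        trace_mul_diagonal_mul_self_le (isHermitian_conjTranspose_mul_mul U hA) heigenvalue
    _ = ‖C‖ ^ 2 * trace (A * A) := by
        simp only [B, Matrix.mul_assoc]
        rw [← Matrix.mul_assoc U, hU, trace_mul_comm Uᴴ]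
        simp only [Matrix.mul_assoc, hU, Matrix.mul_one, Matrix.one_mul]

lemma sq_apply_le_mul_diag {n : Type*} {C : Matrix n n ℝ} (hC : C.PosSemidef) (i j : n) :
    C i j ^ 2 ≤ C i i * C j j := by
  have hdet := (hC.submatrix ![i, j]).det_nonneg
  simp only [det_fin_two, submatrix_apply, cons_val_zero, cons_val_one] at hdet
  have hsymm : C j i = C i j := hC.1.apply i j
  rw [hsymm] at hdet
  linarith [sq (C i j)]

end MatrixNorms

section SampleCovariance

open scoped Matrix.Norms.Operator

variable {n p : ℕ} {A C : Matrix (Fin p) (Fin p) ℝ}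

lemma isProbabilityMeasure_gaussianMeasure (hC : C.PosDef) :
    IsProbabilityMeasure (gaussianMeasure C) := by
  obtain ⟨P, -, hPC, -⟩ :=
    exists_conjTranspose_mul_mul_eq_diagonal (isHermitian_zero (α := ℝ)) hC.posSemidef
  rw [gaussianMeasure_eq_map hC hPC]
  exact Measure.isProbabilityMeasure_map (measurable_mulVec P).aemeasurable

lemma iidGaussian_eq_pi (hC : C.PosDef) :
    iidGaussian n p C = Measure.pi fun _ => gaussianMeasure C := by
  have : SigmaFinite ((volume : Measure (Fin p → ℝ)).withDensity (gaussianPDF C)) :=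
    have : IsProbabilityMeasure (volume.withDensity (gaussianPDF C)) :=
      isProbabilityMeasure_gaussianMeasure hC
    inferInstance
  exact (pi_withDensity fun _ => measurable_gaussianPDF C).symm

lemma isProbabilityMeasure_iidGaussian (hC : C.PosDef) :
    IsProbabilityMeasure (iidGaussian n p C) := by
  have := isProbabilityMeasure_gaussianMeasure hC
  rw [iidGaussian_eq_pi hC]
  infer_instance

lemma hasSubexponentialMGF_gaussianMeasure_dotProduct_mulVec (hA : A.IsHermitian) (hC : C.PosDef) :
    HasSubexponentialMGF (fun x => x ⬝ᵥ A *ᵥ x - trace (A * C)) (4 * trace (A * C * (A * C)))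
      (4 * ‖A * C‖) (gaussianMeasure C) := by
  obtain ⟨P, d, hPC : P * Pᵀ = C, hPA : Pᵀ * A * P = diagonal d⟩ :=
    exists_conjTranspose_mul_mul_eq_diagonal hA hC.posSemidef
  have htrace : trace (A * C) = ∑ i, d i := by
    rw [← hPC, ← Matrix.mul_assoc, trace_mul_comm, ← Matrix.mul_assoc, hPA, trace_diagonal]
  have htrace_sq : trace (A * C * (A * C)) = ∑ i, d i ^ 2 := by
    calc trace (A * C * (A * C)) = trace (Pᵀ * A * P * (Pᵀ * A * P)) := by
          rw [← hPC]
          simp only [Matrix.mul_assoc]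
          rw [trace_mul_comm Pᵀ]
          simp only [Matrix.mul_assoc]
      _ = ∑ i, d i ^ 2 := by
          rw [hPA, diagonal_mul_diagonal, trace_diagonal]
          simp only [sq]
  have hcoord : (fun x => x ⬝ᵥ A *ᵥ x - trace (A * C)) ∘ (P *ᵥ ·) =
      fun z => ∑ i, d i * (z i ^ 2 - 1) := by
    funext z
    simp only [Function.comp_apply, dotProduct_mulVec_of_mul_mul_eq_diagonal hPA, htrace, mul_sub,
      mul_one, Finset.sum_sub_distrib]
  rw [gaussianMeasure_eq_map hC hPC]
  refine .of_map (measurable_mulVec P) (by fun_prop) ?_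
  rw [hcoord, htrace_sq, ← hPC]
  exact hasSubexponentialMGF_sum_mul_sq_sub_one (norm_le_of_mul_mul_eq_diagonal hPA)

lemma trace_mul_sampleCov (A : Matrix (Fin p) (Fin p) ℝ) (X : Fin n → Fin p → ℝ) :
    trace (A * sampleCov X) = (n : ℝ)⁻¹ * ∑ k, X k ⬝ᵥ A *ᵥ X k := by
  rw [sampleCov, Matrix.mul_smul, trace_smul, smul_eq_mul, Matrix.mul_sum, trace_sum]
  congr 1
  refine Finset.sum_congr rfl fun k _ => ?_
  change trace (A * vecMulVec (X k) (X k)) = _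
  rw [mul_vecMulVec, trace_vecMulVec, dotProduct_comm]

lemma hasSubexponentialMGF_iidGaussian_trace (hn : 0 < n) (hA : A.IsHermitian) (hC : C.PosDef) :
    HasSubexponentialMGF (fun X => trace (A * (sampleCov X - C)))
      (4 * ‖C‖ ^ 2 * trace (A * A) / n) (4 * (‖A‖ * ‖C‖) / n) (iidGaussian n p C) := by
  have := isProbabilityMeasure_gaussianMeasure hC
  have hn' : (n : ℝ) ≠ 0 := by positivity
  have haverage : (fun X : Fin n → Fin p → ℝ => trace (A * (sampleCov X - C))) =
      fun X => (n : ℝ)⁻¹ * ∑ k, (X k ⬝ᵥ A *ᵥ X k - trace (A * C)) := by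
    funext X
    rw [Matrix.mul_sub, trace_sub, trace_mul_sampleCov, Finset.sum_sub_distrib, Finset.sum_const,
      Finset.card_univ, Fintype.card_fin, nsmul_eq_mul, mul_sub, inv_mul_cancel_left₀ hn']
  rw [iidGaussian_eq_pi hC, haverage]
  refine ((HasSubexponentialMGF.sum_pi (fun _ => by fun_prop) fun _ : Fin n =>
    hasSubexponentialMGF_gaussianMeasure_dotProduct_mulVec hA hC).const_mul (n : ℝ)⁻¹).mono ?_ ?_
  · rw [Finset.sum_const, Finset.card_univ, Fintype.card_fin, nsmul_eq_mul]
    calc (n : ℝ)⁻¹ ^ 2 * (n * (4 * trace (A * C * (A * C))))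
        = 4 * trace (A * C * (A * C)) / n := by field_simp
      _ ≤ 4 * (‖C‖ ^ 2 * trace (A * A)) / n := by
          gcongr
          exact trace_mul_mul_mul_self_le hA hC.isHermitian
      _ = 4 * ‖C‖ ^ 2 * trace (A * A) / n := by ring
  · rw [abs_of_nonneg (by positivity), inv_mul_eq_div]
    gcongr
    exact norm_mul_le A C

end SampleCovariance

/-- The symmetric Toeplitz matrix of size `p` whose entries on the `j`-th upper and lower diagonals
are `v j`. -/
def symmToeplitz (p : ℕ) (v : ℕ → ℝ) : Matrix (Fin p) (Fin p) ℝ :=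
  Matrix.of fun i j => v ((i : ℤ) - (j : ℤ)).natAbs

section Toeplitz

open scoped Matrix.Norms.Operator

variable {p : ℕ} {T : Finset ℕ} {v : ℕ → ℝ}

lemma sum_natAbs_sub {M : Type*} [AddCommMonoid M] (f : ℕ → M) (k : Fin p) :
    ∑ l : Fin p, f ((k : ℤ) - (l : ℤ)).natAbs =
      (∑ j ∈ Finset.Ico 1 (k + 1 : ℕ), f j) + (f 0 + ∑ j ∈ Finset.Ico 1 (p - k : ℕ), f j) := by
  have hlower : ∑ l ∈ Finset.Ico 0 (k : ℕ), f ((k : ℤ) - (l : ℤ)).natAbs =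
      ∑ j ∈ Finset.Ico 1 (k + 1 : ℕ), f j := by
    refine Finset.sum_nbij' (fun l => k - l) (fun j => k - j) ?_ ?_ ?_ ?_ ?_ <;>
      intro l hl <;> rw [Finset.mem_Ico] at hl
    · exact Finset.mem_Ico.2 (by omega)
    · exact Finset.mem_Ico.2 (by omega)
    · omega
    · omega
    · exact congrArg f (by omega)
  have hupper : ∑ l ∈ Finset.Ico (k + 1 : ℕ) p, f ((k : ℤ) - (l : ℤ)).natAbs =
      ∑ j ∈ Finset.Ico 1 (p - k : ℕ), f j := by
    refine Finset.sum_nbij' (fun l => l - k) (fun j => j + k) ?_ ?_ ?_ ?_ ?_ <;>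
      intro l hl <;> rw [Finset.mem_Ico] at hl
    · exact Finset.mem_Ico.2 (by omega)
    · exact Finset.mem_Ico.2 (by omega)
    · omega
    · omega
    · exact congrArg f (by omega)
  rw [Fin.sum_univ_eq_sum_range (fun l => f ((k : ℤ) - (l : ℤ)).natAbs), Finset.range_eq_Ico,
    ← Finset.sum_Ico_consecutive _ (Nat.zero_le k) k.2.le, Finset.sum_eq_sum_Ico_succ_bot k.2,
    hlower, hupper, sub_self, Int.natAbs_zero]

lemma sum_range_sum_Ico_one (f : ℕ → ℝ) (p : ℕ) :
    ∑ k ∈ Finset.range p, ∑ j ∈ Finset.Ico 1 (k + 1), f j =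
      ∑ j ∈ Finset.Ico 1 p, ((p : ℝ) - j) * f j := by
  induction p with
  | zero => simp
  | succ p ih =>
    have hlast : ∑ j ∈ Finset.Ico 1 p, ((p : ℝ) - j) * f j =
        ∑ j ∈ Finset.Ico 1 (p + 1), ((p : ℝ) - j) * f j := by
      rcases p.eq_zero_or_pos with rfl | hp
      · simp
      · rw [Finset.sum_Ico_succ_top hp, sub_self, zero_mul, add_zero]
    rw [Finset.sum_range_succ, ih, hlast, ← Finset.sum_add_distrib]
    refine Finset.sum_congr rfl fun j _ => ?_
    push_cast
    ring

lemma sum_sum_natAbs_sub (f : ℕ → ℝ) :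
    ∑ k : Fin p, ∑ l : Fin p, f ((k : ℤ) - (l : ℤ)).natAbs =
      p * f 0 + 2 * ∑ j ∈ Finset.Ico 1 p, ((p : ℝ) - j) * f j := by
  have hreflect : ∑ k ∈ Finset.range p, ∑ j ∈ Finset.Ico 1 (p - k), f j =
      ∑ k ∈ Finset.range p, ∑ j ∈ Finset.Ico 1 (k + 1), f j := by
    rw [← Finset.sum_range_reflect]
    refine Finset.sum_congr rfl fun k hk => ?_
    rw [Finset.mem_range] at hk
    rw [show p - (p - 1 - k) = k + 1 by omega]
  simp_rw [sum_natAbs_sub, Finset.sum_add_distrib]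
  rw [Fin.sum_univ_eq_sum_range (fun k => ∑ j ∈ Finset.Ico 1 (k + 1), f j),
    Fin.sum_univ_eq_sum_range (fun k => ∑ j ∈ Finset.Ico 1 (p - k), f j), hreflect,
    sum_range_sum_Ico_one, Finset.sum_const, Finset.card_univ, Fintype.card_fin, nsmul_eq_mul]
  ring

lemma isHermitian_symmToeplitz (p : ℕ) (v : ℕ → ℝ) : (symmToeplitz p v).IsHermitian := by
  ext i j
  exact congrArg v (by omega)

lemma trace_symmToeplitz_mul_symmToeplitz (p : ℕ) (v w : ℕ → ℝ) :
    trace (symmToeplitz p v * symmToeplitz p w) =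
      p * (v 0 * w 0) + 2 * ∑ j ∈ Finset.Ico 1 p, ((p : ℝ) - j) * (v j * w j) := by
  rw [← sum_sum_natAbs_sub fun j => v j * w j]
  refine Finset.sum_congr rfl fun k _ => ?_
  rw [diag_apply, mul_apply]
  refine Finset.sum_congr rfl fun l _ => ?_
  rw [← (isHermitian_symmToeplitz p w).apply]
  rfl

lemma norm_symmToeplitz_le (p : ℕ) (v : ℕ → ℝ) :
    ‖symmToeplitz p v‖ ≤ |v 0| + 2 * ∑ j ∈ Finset.Ico 1 p, |v j| := by
  have hnonneg : 0 ≤ |v 0| + 2 * ∑ j ∈ Finset.Ico 1 p, |v j| := by positivity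
  rw [linfty_opNorm_def, ← NNReal.coe_mk _ hnonneg, NNReal.coe_le_coe, Finset.sup_le_iff]
  intro k _
  rw [← NNReal.coe_le_coe, NNReal.coe_sum, NNReal.coe_mk]
  have hsubset {q : ℕ} (hq : q ≤ p) :
      ∑ j ∈ Finset.Ico 1 q, |v j| ≤ ∑ j ∈ Finset.Ico 1 p, |v j| :=
    Finset.sum_le_sum_of_subset_of_nonneg (Finset.Ico_subset_Ico_right hq)
      fun _ _ _ => abs_nonneg _
  calc ∑ l, ‖symmToeplitz p v k l‖ = _ := sum_natAbs_sub (fun j => |v j|) k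
    _ ≤ |v 0| + 2 * ∑ j ∈ Finset.Ico 1 p, |v j| := by
        linarith [hsubset (Nat.succ_le_of_lt k.2), hsubset (Nat.sub_le p k)]

lemma abs_le_abs_zero_of_posSemidef_symmToeplitz (h : (symmToeplitz p v).PosSemidef) {j : ℕ}
    (hj : j < p) : |v j| ≤ |v 0| := by
  have hentry := sq_apply_le_mul_diag h ⟨j, hj⟩ ⟨0, by omega⟩
  simp only [symmToeplitz, of_apply, sub_self, Int.natAbs_zero, Nat.cast_zero, sub_zero,
    Int.natAbs_natCast] at hentry
  rwa [← sq_le_sq, sq (v 0)]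

lemma norm_symmToeplitz_le_of_posSemidef (h : (symmToeplitz p v).PosSemidef)
    (hsupp : ∀ j ∈ Finset.Ico 1 p, j ∉ T → v j = 0) :
    ‖symmToeplitz p v‖ ≤ (2 * T.card + 1) * |v 0| := by
  have hsum : ∑ j ∈ Finset.Ico 1 p, |v j| ≤ T.card * |v 0| := by
    calc ∑ j ∈ Finset.Ico 1 p, |v j| = ∑ j ∈ Finset.Ico 1 p with j ∈ T, |v j| := by
          rw [Finset.sum_filter_of_ne]
          intro j hj hne
          by_contra hT
          exact hne (by rw [hsupp j hj hT, abs_zero])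
      _ ≤ ((Finset.Ico 1 p).filter (· ∈ T)).card • |v 0| :=
          Finset.sum_le_card_nsmul _ _ _ fun j hj =>
            abs_le_abs_zero_of_posSemidef_symmToeplitz h
              (Finset.mem_Ico.1 (Finset.mem_filter.1 hj).1).2
      _ ≤ T.card * |v 0| := by
          rw [nsmul_eq_mul]
          gcongr
          exact fun j hj => (Finset.mem_filter.1 hj).2
  linarith [norm_symmToeplitz_le p v]

lemma sum_lagMatrix_eq_symmToeplitz (p : ℕ) (T : Finset ℕ) :
    ∑ j ∈ T, lagMatrix p j =
      symmToeplitz p fun j => if j ∈ T then 1 / (2 * ((p : ℝ) - j)) else 0 := by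
  ext k l
  simp only [Matrix.sum_apply, lagMatrix, symmToeplitz, of_apply, Finset.sum_ite_eq]

lemma two_mul_sum_Ico_ite_mem (hT : T ⊆ Finset.Ico 1 p) (v : ℕ → ℝ) :
    2 * ∑ j ∈ Finset.Ico 1 p, ((p : ℝ) - j) * ((if j ∈ T then 1 / (2 * ((p : ℝ) - j)) else 0) * v j)
      = ∑ j ∈ T, v j := by
  rw [Finset.mul_sum, ← Finset.sum_subset hT]
  · refine Finset.sum_congr rfl fun j hj => ?_
    have hpj : (p : ℝ) - j ≠ 0 :=
      sub_ne_zero.2 (Nat.cast_injective.ne (Finset.mem_Ico.1 (hT hj)).2.ne')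
    rw [if_pos hj]
    field_simp
  · intro j _ hj
    rw [if_neg hj, zero_mul, mul_zero, mul_zero]

lemma trace_sum_lagMatrix_mul_symmToeplitz (hT : T ⊆ Finset.Ico 1 p) (v : ℕ → ℝ) :
    trace ((∑ j ∈ T, lagMatrix p j) * symmToeplitz p v) = ∑ j ∈ T, v j := by
  have hzero : 0 ∉ T := fun h => by simpa using hT h
  rw [sum_lagMatrix_eq_symmToeplitz, trace_symmToeplitz_mul_symmToeplitz, if_neg hzero, zero_mul,
    mul_zero, zero_add, two_mul_sum_Ico_ite_mem hT]

lemma trace_sum_lagMatrix (hT : T ⊆ Finset.Ico 1 p) : trace (∑ j ∈ T, lagMatrix p j) = 0 := by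
  have hzero : 0 ∉ T := fun h => by simpa using hT h
  rw [sum_lagMatrix_eq_symmToeplitz]
  exact Finset.sum_eq_zero fun k _ => by simp [symmToeplitz, hzero]

lemma trace_sum_lagMatrix_mul_self (hT : T ⊆ Finset.Ico 1 p) :
    trace ((∑ j ∈ T, lagMatrix p j) * ∑ j ∈ T, lagMatrix p j) =
      (∑ j ∈ T, 1 / ((p : ℝ) - j)) / 2 := by
  calc trace ((∑ j ∈ T, lagMatrix p j) * ∑ j ∈ T, lagMatrix p j)
      = ∑ j ∈ T, if j ∈ T then 1 / (2 * ((p : ℝ) - j)) else 0 := by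
        rw [← trace_sum_lagMatrix_mul_symmToeplitz hT, ← sum_lagMatrix_eq_symmToeplitz]
    _ = (∑ j ∈ T, 1 / ((p : ℝ) - j)) / 2 := by
        rw [Finset.sum_div]
        refine Finset.sum_congr rfl fun j hj => ?_
        rw [if_pos hj, div_div, mul_comm]

lemma norm_sum_lagMatrix_le (hT : T ⊆ Finset.Ico 1 p) :
    ‖∑ j ∈ T, lagMatrix p j‖ ≤ ∑ j ∈ T, 1 / ((p : ℝ) - j) := by
  have hzero : 0 ∉ T := fun h => by simpa using hT h
  rw [sum_lagMatrix_eq_symmToeplitz, ← two_mul_sum_Ico_ite_mem hT]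
  refine (norm_symmToeplitz_le p _).trans_eq ?_
  rw [if_neg hzero, abs_zero, zero_add]
  congr 1
  refine Finset.sum_congr rfl fun j hj => ?_
  have hpj : 0 < (p : ℝ) - j := sub_pos.2 (Nat.cast_lt.2 (Finset.mem_Ico.1 hj).2)
  split_ifs
  · rw [abs_of_pos (by positivity)]
    field_simp
  · simp

end Toeplitz

section ScanTest

open scoped Matrix.Norms.Operator

variable {n p s S : ℕ} {T : Finset ℕ} {C : Matrix (Fin p) (Fin p) ℝ} {K u σ t : ℝ}

lemma Icc_one_subset_Ico_one (hS : S < p) : Finset.Icc 1 S ⊆ Finset.Ico 1 p :=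
  fun _ hj => Finset.mem_Ico.2 ⟨(Finset.mem_Icc.1 hj).1, (Finset.mem_Icc.1 hj).2.trans_lt hS⟩

lemma sum_one_div_sub_le (hS : S < p) (hT : T ⊆ Finset.Icc 1 S) :
    ∑ j ∈ T, 1 / ((p : ℝ) - j) ≤ T.card / ((p : ℝ) - S) := by
  have hpS : 0 < (p : ℝ) - S := sub_pos.2 (Nat.cast_lt.2 hS)
  rw [← mul_one_div, ← nsmul_eq_mul]
  refine Finset.sum_le_card_nsmul _ _ _ fun j hj => ?_
  have hjS : (j : ℝ) ≤ S := Nat.cast_le.2 (Finset.mem_Icc.1 (hT hj)).2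
  gcongr

lemma hasSubexponentialMGF_iidGaussian_trace_sum_lagMatrix (hn : 0 < n) (hS : S < p)
    (hT : T ⊆ Finset.Icc 1 S) (hC : C.PosDef) (hK : ‖C‖ ≤ K) :
    HasSubexponentialMGF (fun X => trace ((∑ j ∈ T, lagMatrix p j) * (sampleCov X - C)))
      (2 * K ^ 2 * (T.card / (n * ((p : ℝ) - S)))) (4 * K * (T.card / (n * ((p : ℝ) - S))))
      (iidGaussian n p C) := by
  have hT' := hT.trans (Icc_one_subset_Ico_one hS)
  have hA : (∑ j ∈ T, lagMatrix p j).IsHermitian := by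
    rw [sum_lagMatrix_eq_symmToeplitz]
    exact isHermitian_symmToeplitz p _
  have hsum := sum_one_div_sub_le hS hT
  have hsum0 := (norm_nonneg _).trans (norm_sum_lagMatrix_le hT')
  have hcard0 := hsum0.trans hsum
  have : 0 ≤ K := (norm_nonneg C).trans hK
  rw [div_mul_eq_div_div_swap]
  refine (hasSubexponentialMGF_iidGaussian_trace hn hA hC).mono ?_ ?_
  · calc 4 * ‖C‖ ^ 2 * trace ((∑ j ∈ T, lagMatrix p j) * ∑ j ∈ T, lagMatrix p j) / n
        = 2 * ‖C‖ ^ 2 * ((∑ j ∈ T, 1 / ((p : ℝ) - j)) / n) := by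
          rw [trace_sum_lagMatrix_mul_self hT']
          ring
      _ ≤ 2 * K ^ 2 * (T.card / ((p : ℝ) - S) / n) := by gcongr
  · calc 4 * (‖∑ j ∈ T, lagMatrix p j‖ * ‖C‖) / n
        ≤ 4 * ((T.card / ((p : ℝ) - S)) * K) / n := by
          gcongr
          exact (norm_sum_lagMatrix_le hT').trans hsum
      _ = 4 * K * (T.card / ((p : ℝ) - S) / n) := by ring

lemma iidGaussian_one_exists_trace_ge_le (hn : 0 < n) (hs : 1 ≤ s) (hS : S < p) (hu : 0 ≤ u)
    (ht : max √(4 * u * s * log (S.choose s) / (n * ((p : ℝ) - S)))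
      (8 * u * s * log (S.choose s) / (n * ((p : ℝ) - S))) ≤ t) :
    iidGaussian n p 1 {X | ∃ T : Finset ℕ, T ⊆ Finset.Icc 1 S ∧ T.card = s ∧
      trace ((∑ j ∈ T, lagMatrix p j) * (sampleCov X - 1)) ≥ t} ≤
        ENNReal.ofReal (exp (-(u - 1) * log (S.choose s))) := by
  have := isProbabilityMeasure_iidGaussian (n := n) (p := p) PosDef.one
  set L := log (S.choose s)
  have hpS : 0 < (p : ℝ) - S := sub_pos.2 (Nat.cast_lt.2 hS)
  have hnorm : ‖(1 : Matrix (Fin p) (Fin p) ℝ)‖ ≤ 1 := by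
    have : Nonempty (Fin p) := ⟨⟨S, hS⟩⟩
    exact norm_one.le
  have htail : ∀ T ∈ (Finset.Icc 1 S).powersetCard s, iidGaussian n p 1
      {X | t ≤ trace ((∑ j ∈ T, lagMatrix p j) * (sampleCov X - 1))} ≤
        ENNReal.ofReal (exp (-(u * L))) := by
    intro T hT
    obtain ⟨hTS, hTs⟩ := Finset.mem_powersetCard.1 hT
    have hmgf := hasSubexponentialMGF_iidGaussian_trace_sum_lagMatrix hn hS hTS PosDef.one hnorm
    rw [hTs] at hmgf
    refine (measure_mono fun X (hX : t ≤ _) => ?_).trans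
      (hmgf.measure_ge_le (by positivity) (x := u * L) (by positivity))
    refine le_trans (le_of_eq ?_) (ht.trans hX)
    congr 1
    · exact congrArg sqrt (by ring)
    · ring
  calc _ ≤ iidGaussian n p 1 (⋃ T ∈ (Finset.Icc 1 S).powersetCard s,
          {X | t ≤ trace ((∑ j ∈ T, lagMatrix p j) * (sampleCov X - 1))}) := by
        refine measure_mono fun X ⟨T, hTS, hTs, hX⟩ => ?_
        exact Set.mem_biUnion (Finset.mem_powersetCard.2 ⟨hTS, hTs⟩) hX
    _ ≤ ∑ T ∈ (Finset.Icc 1 S).powersetCard s, iidGaussian n p 1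
          {X | t ≤ trace ((∑ j ∈ T, lagMatrix p j) * (sampleCov X - 1))} :=
        measure_biUnion_finset_le _ _
    _ ≤ (S.choose s) • ENNReal.ofReal (exp (-(u * L))) := by
        refine (Finset.sum_le_card_nsmul _ _ _ htail).trans_eq ?_
        rw [Finset.card_powersetCard, Nat.card_Icc, Nat.add_sub_cancel]
    _ ≤ ENNReal.ofReal (exp (-(u - 1) * L)) := by
        rw [← ENNReal.ofReal_nsmul, nsmul_eq_mul, show -(u - 1) * L = L + -(u * L) by ring, exp_add]
        gcongr
        exact le_exp_log _

lemma max_sqrt_sq_mul (hK : 0 ≤ K) (a b : ℝ) : max √(K ^ 2 * a) (K * b) = K * max √a b := by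
  rw [mul_max_of_nonneg _ _ hK, sqrt_mul (sq_nonneg K), sqrt_sq hK]

lemma trace_sum_lagMatrix_mul_sub_one (hT : T ⊆ Finset.Ico 1 p) (v : ℕ → ℝ)
    (M : Matrix (Fin p) (Fin p) ℝ) :
    trace ((∑ j ∈ T, lagMatrix p j) * (M - 1)) =
      trace ((∑ j ∈ T, lagMatrix p j) * (M - symmToeplitz p v)) + ∑ j ∈ T, v j := by
  rw [Matrix.mul_sub, Matrix.mul_sub, trace_sub, trace_sub, Matrix.mul_one,
    trace_sum_lagMatrix hT, trace_sum_lagMatrix_mul_symmToeplitz hT]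
  ring

lemma iidGaussian_forall_trace_lt_le (hn : 0 < n) (hs : 1 ≤ s) (hS : S < p) (hu : 0 ≤ u)
    (hσ : σ ≥ (1 / (s : ℝ)) * (t + (2 * s + 1) *
      max √(u * s / (n * ((p : ℝ) - S))) (2 * u * s / (n * ((p : ℝ) - S)))))
    (hC : memFplus p s S σ 1 C) :
    iidGaussian n p C {X | ∀ T : Finset ℕ, T ⊆ Finset.Icc 1 S → T.card = s →
      trace ((∑ j ∈ T, lagMatrix p j) * (sampleCov X - 1)) < t} ≤
        ENNReal.ofReal (exp (-u / 4)) := by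
  obtain ⟨hpos, v, hv0, hCv, T, hTS, hTs, hvσ, hv⟩ := hC
  obtain rfl : C = symmToeplitz p v := Matrix.ext hCv
  have := isProbabilityMeasure_iidGaussian (n := n) hpos
  have hpS : 0 < (p : ℝ) - S := sub_pos.2 (Nat.cast_lt.2 hS)
  have hnorm : ‖symmToeplitz p v‖ ≤ 2 * s + 1 := by
    have hsupp : ∀ j ∈ Finset.Ico 1 p, j ∉ T → v j = 0 := fun j hj =>
      hv j (Finset.mem_Ico.1 hj).1 (Nat.le_sub_one_of_lt (Finset.mem_Ico.1 hj).2)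
    simpa [hv0, hTs] using norm_symmToeplitz_le_of_posSemidef hpos.posSemidef hsupp
  have hsignal : t + (2 * s + 1) * max √(u * s / (n * ((p : ℝ) - S)))
      (2 * u * s / (n * ((p : ℝ) - S))) ≤ ∑ j ∈ T, v j := by
    refine le_trans ?_ (Finset.card_nsmul_le_sum T v σ hvσ)
    rwa [hTs, nsmul_eq_mul, ← div_le_iff₀' (by positivity), div_eq_inv_mul, ← one_div]
  have hmgf := (hasSubexponentialMGF_iidGaussian_trace_sum_lagMatrix hn hS hTS hpos hnorm).neg
  rw [hTs] at hmgf
  refine (measure_mono fun X hX => ?_).trans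
    ((hmgf.measure_ge_le (by positivity) (x := u / 4) (by positivity)).trans_eq ?_)
  · have hlt := hX T hTS hTs
    rw [trace_sum_lagMatrix_mul_sub_one (hTS.trans (Icc_one_subset_Ico_one hS)) v] at hlt
    have hthreshold : max √(2 * (2 * (2 * s + 1) ^ 2 * (s / (n * ((p : ℝ) - S)))) * (u / 4))
        (2 * (4 * (2 * s + 1) * (s / (n * ((p : ℝ) - S)))) * (u / 4)) =
        (2 * s + 1) * max √(u * s / (n * ((p : ℝ) - S))) (2 * u * s / (n * ((p : ℝ) - S))) := by
      rw [← max_sqrt_sq_mul (by positivity)]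
      congr 1
      · exact congrArg sqrt (by ring)
      · ring
    rw [Set.mem_ofPred_eq, hthreshold]
    linarith
  · rw [neg_div]

end ScanTest

theorem test_HS_plus_risk_general {p n s S : ℕ} (hn : 0 < n) (hs : 1 ≤ s) (hS : S < p)
    (u σ t : ℝ) (hu : 0 ≤ u)
    (ht : max √(4 * u * s * log (S.choose s) / (n * ((p : ℝ) - S)))
      (8 * u * s * log (S.choose s) / (n * ((p : ℝ) - S))) ≤ t)
    (hσ : σ ≥ (1 / (s : ℝ)) * (t + (2 * s + 1) *
      max √(u * s / (n * ((p : ℝ) - S))) (2 * u * s / (n * ((p : ℝ) - S))))) :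
    (iidGaussian n p 1) {X | ∃ T : Finset ℕ, T ⊆ Finset.Icc 1 S ∧ T.card = s ∧
        trace ((∑ j ∈ T, lagMatrix p j) * (sampleCov X - 1)) ≥ t}
    + ⨆ (Cov : Matrix (Fin p) (Fin p) ℝ) (_ : memFplus p s S σ 1 Cov),
        (iidGaussian n p Cov) {X | ∀ T : Finset ℕ, T ⊆ Finset.Icc 1 S → T.card = s →
          trace ((∑ j ∈ T, lagMatrix p j) * (sampleCov X - 1)) < t}
    ≤ ENNReal.ofReal (exp (-(u - 1) * log (S.choose s)) + exp (-u / 4)) := by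
  rw [ENNReal.ofReal_add (exp_nonneg _) (exp_nonneg _)]
  gcongr
  · exact iidGaussian_one_exists_trace_ge_le hn hs hS hu ht
  · exact iSup₂_le fun _ hC => iidGaussian_forall_trace_lt_le hn hs hS hu hσ hC

/-- Risk bound for the one-sided highly-sparse (scan) test `Δ^{HS+}`. -/
theorem test_HS_plus_risk {p n s S : ℕ} (hn : 0 < n) (hs : 1 ≤ s) (hsS : s < S)
    (hS : (S : ℝ) < (p:ℝ)/2) (u σ t : ℝ) (hu : 1 < u)
    (ht : t = max (Real.sqrt (4 * u * s * Real.log (S.choose s) / (n * ((p:ℝ) - S))))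
        (8 * u * s * Real.log (S.choose s) / (n * ((p:ℝ) - S))))
    (hσ : σ ≥ (1 / (s:ℝ)) * (t + (2 * s + 1) *
        max (Real.sqrt (u * s / (n * ((p:ℝ) - S)))) (2 * u * s / (n * ((p:ℝ) - S))))) :
    (iidGaussian n p 1) {X | ∃ T : Finset ℕ, T ⊆ Finset.Icc 1 S ∧ T.card = s ∧
        Matrix.trace ((∑ j ∈ T, lagMatrix p j) * (sampleCov X - 1)) ≥ t}
    + ⨆ (Cov : Matrix (Fin p) (Fin p) ℝ) (_ : memFplus p s S σ 1 Cov),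
        (iidGaussian n p Cov) {X | ∀ T : Finset ℕ, T ⊆ Finset.Icc 1 S → T.card = s →
          Matrix.trace ((∑ j ∈ T, lagMatrix p j) * (sampleCov X - 1)) < t}
    ≤ ENNReal.ofReal (Real.exp (-(u - 1) * Real.log (S.choose s)) + Real.exp (-u/4)) := by
  have hSp : (S : ℝ) < p := hS.trans_le (half_le_self p.cast_nonneg)
  exact test_HS_plus_risk_general hn hs (Nat.cast_lt.1 hSp) u σ t (by linarith) ht.ge hσ
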